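/- Let K be a Hopf subalgebra of H and let C, D be simple subcoalgebras of H with DK = CK. Then the conjugate Hopf subalgebras coincide: {}^D K = {}^C K. -/

import Mathlib

open TensorProduct

namespace MackeyPaper

noncomputable section

universe v

variable (k : Type) [Field k] [CharZero k] [IsAlgClosed k]
variable (H : Type) [Ring H] [HopfAlgebra k H]

/-- A subcoalgebra of `H`: a `k`-subspace `C` with `Δ(C) ⊆ C ⊗ C`. -/
def IsSubcoalgebra (C : Submodule k H) : Prop :=
  ∀ c ∈ C, Coalgebra.comul (R := k) c ∈
    LinearMap.range (TensorProduct.map C.subtype C.subtype)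

/-- A simple (nonzero, minimal) subcoalgebra of `H`. -/
def IsSimpleSubcoalgebra (C : Submodule k H) : Prop :=
  IsSubcoalgebra k H C ∧ C ≠ ⊥ ∧
    ∀ D : Submodule k H, D ≤ C → IsSubcoalgebra k H D → D ≠ ⊥ → D = C

/-- A Hopf subalgebra of `H`: a subalgebra which is a subcoalgebra and is
stable under the antipode. -/
def IsHopfSubalgebra (K : Subalgebra k H) : Prop :=
  IsSubcoalgebra k H K.toSubmodule ∧ ∀ x ∈ K, HopfAlgebra.antipode (R := k) x ∈ K

/-- `Λ` is the (two-sided) idempotent integral of the Hopf subalgebra `K`,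
i.e. the integral normalized by `ε(Λ) = 1`. -/
def IsIdempotentIntegral (K : Subalgebra k H) (Λ : H) : Prop :=
  Λ ∈ K ∧ Coalgebra.counit (R := k) Λ = 1 ∧
    ∀ x ∈ K, x * Λ = Coalgebra.counit (R := k) x • Λ ∧
      Λ * x = Coalgebra.counit (R := k) x • Λ

/-- A cocommutative element of `H`; the cocommutative elements of `H` form
the character ring `C(H^*)`. -/
def IsCocomm (x : H) : Prop :=
  (TensorProduct.comm k H H) (Coalgebra.comul (R := k) x) = Coalgebra.comul (R := k) x

/-- The character ring `C(H^*)`, i.e. the space of cocommutative elements of `H`,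
as a `k`-subspace of `H`. -/
def charRing : Submodule k H :=
  LinearMap.ker ((TensorProduct.comm k H H).toLinearMap ∘ₗ Coalgebra.comul (R := k)
      - Coalgebra.comul (R := k))

/-- `d` is the irreducible character (of `H^*`) associated to the simple
subcoalgebra `C`: the unique cocommutative element of `C` whose counit is the
positive square root of `dim_k C`. -/
def IsCharacterOf (d : H) (C : Submodule k H) : Prop :=
  d ∈ C ∧ IsCocomm k H d ∧
    Coalgebra.counit (R := k) d = ((Nat.sqrt (Module.finrank k ↥C) : ℕ) : k)

/-- The right coset `CK` of a subcoalgebra `C`, i.e. the subspace `C·K`. -/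
def CKsub (K : Subalgebra k H) (C : Submodule k H) : Submodule k H :=
  C * K.toSubmodule

/-- The conjugate Hopf subalgebra `ᶜK` of `K` by a simple subcoalgebra `C`
(with associated irreducible character `c`): the span of all simple
subcoalgebras of `H` whose irreducible character `d` satisfies
`d·c·Λ_K = ε(d)·c·Λ_K`.  (The condition is stated for all cocommutative
elements of `C` resp. `D`; this is equivalent, since the cocommutative
elements of a simple subcoalgebra are exactly the scalar multiples of its
irreducible character.) -/
def conjK (K : Subalgebra k H) (Λ : H) (C : Submodule k H) : Submodule k H :=
  sSup {D : Submodule k H | IsSimpleSubcoalgebra k H D ∧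
    ∀ d ∈ D, IsCocomm k H d → ∀ c ∈ C, IsCocomm k H c →
      d * (c * Λ) = Coalgebra.counit (R := k) d • (c * Λ)}

/-- A complete irredundant system of representatives (by simple subcoalgebras)
of the double cosets `L\H/K`.  (Taking `L = ⊥` gives a system of
representatives of the right cosets `H/K`.) -/
def IsDoubleCosetReps (L K : Subalgebra k H) {ι : Type} (rep : ι → Submodule k H) : Prop :=
  (∀ i, IsSimpleSubcoalgebra k H (rep i)) ∧
  (∀ i j, L.toSubmodule * rep i * K.toSubmodule = L.toSubmodule * rep j * K.toSubmodule
      → i = j) ∧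
  (∀ C : Submodule k H, IsSimpleSubcoalgebra k H C →
      ∃ i, C ≤ L.toSubmodule * rep i * K.toSubmodule)

section Ind

variable (K : Subalgebra k H) (M : Type v) [AddCommGroup M] [Module k M]
  [Module ↥K M] [IsScalarTower k ↥K M]

/-- The relations defining the induced module `H ⊗_K M` as a quotient of
`H ⊗_k M`: the `H`-submodule generated by the elements `a ⊗ m - 1 ⊗ a·m`
for `a ∈ K` (equivalently, spanned by all `h·a ⊗ m - h ⊗ a·m`). -/
def indRel : Submodule H (H ⊗[k] M) :=
  Submodule.span H {z | ∃ (a : ↥K) (m : M),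
    z = (a : H) ⊗ₜ[k] m - (1 : H) ⊗ₜ[k] (a • m)}

/-- The induced module `M↑_K^H = H ⊗_K M`, a left `H`-module. -/
abbrev Ind := (H ⊗[k] M) ⧸ indRel k H K M

variable (C : Submodule k H)

/-- The underlying space `CK ⊗_k M` of which the conjugate module `ᶜM` is a
quotient. -/
def CKM : Type _ := ↥(CKsub k H K C) ⊗[k] M

instance : AddCommGroup (CKM k H K M C) :=
  inferInstanceAs (AddCommGroup (↥(CKsub k H K C) ⊗[k] M))

instance : Module k (CKM k H K M C) :=
  inferInstanceAs (Module k (↥(CKsub k H K C) ⊗[k] M))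

/-- The pure tensor `x ⊗ m` as an element of `CK ⊗_k M`. -/
def ckmk (x : ↥(CKsub k H K C)) (m : M) : CKM k H K M C := x ⊗ₜ[k] m

/-- The relations defining the conjugate module `ᶜM = CK ⊗_K M` as a quotient
of `CK ⊗_k M`: `x·a ⊗ m - x ⊗ a·m` for `a ∈ K`. -/
def conjRel : Submodule k (CKM k H K M C) :=
  Submodule.span k {z | ∃ (x : ↥(CKsub k H K C)) (a : ↥K) (m : M)
    (hxa : (x : H) * (a : H) ∈ CKsub k H K C),
    z = ckmk k H K M C ⟨(x : H) * (a : H), hxa⟩ m - ckmk k H K M C x (a • m)}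

/-- The conjugate module `ᶜM := CK ⊗_K M`. -/
abbrev ConjM := CKM k H K M C ⧸ conjRel k H K M C

/-- The canonical copy of the conjugate module `ᶜM = CK ⊗_K M` inside
`H ⊗_K M` (the image of `CK ⊗_K M` under multiplication; this is indeed a
copy of `ᶜM` since `H` is a free right `K`-module and `CK` is one of the
coset summands). -/
def conjMsub : Submodule k (Ind k H K M) :=
  Submodule.span k {z | ∃ (x : H) (_ : x ∈ CKsub k H K C) (m : M),
    z = Submodule.Quotient.mk (x ⊗ₜ[k] m)}

end Ind

section Comp

variable (L K : Subalgebra k H) (Λ : H) (C : Submodule k H)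
variable (M : Type v) [AddCommGroup M] [Module k M] [Module ↥K M] [IsScalarTower k ↥K M]

/-- The underlying space `L ⊗_k (CK ⊗_k M)`. -/
def LCM : Type _ := ↥L ⊗[k] CKM k H K M C

instance : AddCommGroup (LCM k H L K C M) :=
  inferInstanceAs (AddCommGroup (↥L ⊗[k] CKM k H K M C))

instance : Module k (LCM k H L K C M) :=
  inferInstanceAs (Module k (↥L ⊗[k] CKM k H K M C))

/-- The pure tensor `l ⊗ w` as an element of `L ⊗_k (CK ⊗_k M)`. -/
def lcmk (l : ↥L) (w : CKM k H K M C) : LCM k H L K C M := l ⊗ₜ[k] w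

/-- The relations defining `L ⊗_{L ∩ ᶜK} ᶜM` as a quotient of
`L ⊗_k (CK ⊗_k M)`: the balancedness relations over `L ∩ ᶜK` (first set),
together with (the image of) the relations defining `ᶜM = CK ⊗_K M`
(second set). -/
def compRel : Submodule k (LCM k H L K C M) :=
  Submodule.span k
    ({z | ∃ (l : ↥L) (a : H) (haL : a ∈ L) (_ : a ∈ conjK k H K Λ C)
        (x : ↥(CKsub k H K C)) (m : M) (hax : a * (x : H) ∈ CKsub k H K C),
        z = lcmk k H L K C M ⟨(l : H) * a, mul_mem l.2 haL⟩ (ckmk k H K M C x m)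
          - lcmk k H L K C M l (ckmk k H K M C ⟨a * (x : H), hax⟩ m)} ∪
     {z | ∃ (l : ↥L) (x : ↥(CKsub k H K C)) (a : ↥K) (m : M)
        (hxa : (x : H) * (a : H) ∈ CKsub k H K C),
        z = lcmk k H L K C M l (ckmk k H K M C ⟨(x : H) * (a : H), hxa⟩ m)
          - lcmk k H L K C M l (ckmk k H K M C x (a • m))})

/-- The module `L ⊗_{L ∩ ᶜK} ᶜM` (a left `L`-module via multiplication on the
first tensor factor). -/
abbrev Comp := LCM k H L K C M ⧸ compRel k H L K Λ C M

end Comp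

open DirectSum

section Mackey

variable (L K : Subalgebra k H) (Λ : H)

/-- The Mackey isomorphism property for the pair `(L, K)` at the `K`-module
`M`: for any system of double coset representatives, the left-multiplication
map `⊕_C L ⊗_{L ∩ ᶜK} ᶜM → M↑_K^H↓_L^H`, `l ⊗ v ↦ l·v`, is an isomorphism of
`L`-modules.  (A `k`-linear map satisfying the displayed formula on the
spanning elements is automatically `L`-equivariant for the evident
`L`-actions, so this property is stated for `k`-linear maps.) -/
def MackeyAt (M : Type v) [AddCommGroup M] [Module k M] [Module ↥K M]
    [IsScalarTower k ↥K M] [Module.Finite k M] : Prop :=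
  ∀ (ι : Type) [DecidableEq ι] (rep : ι → Submodule k H),
    IsDoubleCosetReps k H L K rep →
    ∃ π : (⨁ i : ι, Comp k H L K Λ (rep i) M) →ₗ[k] Ind k H K M,
      Function.Bijective π ∧
      ∀ (i : ι) (l : ↥L) (x : ↥(CKsub k H K (rep i))) (m : M),
        π (DirectSum.of (fun i => Comp k H L K Λ (rep i) M) i
            (Submodule.Quotient.mk (lcmk k H L K (rep i) M l (ckmk k H K M (rep i) x m)))) =
          Submodule.Quotient.mk (((l : H) * (x : H)) ⊗ₜ[k] m)

/-- `(L, K)` is a Mackey pair of Hopf subalgebras of `H` (here `Λ` is the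
idempotent integral of `K`): for every finite-dimensional `K`-module `M` the
left-multiplication homomorphism `π_M` is an isomorphism. -/
def IsMackeyPair : Prop :=
  ∀ (M : Type v) [AddCommGroup M] [Module k M] [Module ↥K M]
    [IsScalarTower k ↥K M] [Module.Finite k M], MackeyAt k H L K Λ M

end Mackey

/-!
Let `χ i` be the irreducible characters of `H*`, of degrees `d i`, and `κ` the character of the
regular comodule of `K`, so that `κ Λ = ε(κ) Λ`. Write `χ i κ = ∑ j, T i j χ j` with `T i j ∈ ℕ`
and put `y i = χ i Λ / d i`. Multiplying by `Λ` and comparing degrees gives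
`∑ j, T i j d j (y j - y i) = 0`: the vector-valued function `y` is harmonic for the weights
`T i j d j`. These weights have a strictly positive stationary measure, namely the multiplicities
of the `χ i` in the character of the regular comodule of `H`, which absorbs `κ`. By the maximum
principle (in its `L²` form) `y i = y j` whenever `T i j ≠ 0`, which means that the `j`-th simple
subcoalgebra lies in the product of the `i`-th one with `K`. Finally the conjugate of `K` by the
`i`-th simple subcoalgebra depends only on `y i`.
-/

open scoped Kronecker

section TracialForms

variable {F : Type*} [Field F] {A : Type*} [Ring A] [Algebra F A]

/-- A linear form on an algebra is *tracial* if it is invariant under cyclic permutations, like the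
character of a representation. -/
def IsTracial (τ : A →ₗ[F] F) : Prop :=
  ∀ x y, τ (x * y) = τ (y * x)

theorem IsTracial.exists_comp_eq {B : Type*} [Ring B] [Algebra F B] {ψ : A →ₐ[F] B}
    (hψ : Function.Surjective ψ) {τ : A →ₗ[F] F} (hτ : IsTracial τ)
    (hker : ∀ x, ψ x = 0 → τ x = 0) :
    ∃ σ : B →ₗ[F] F, IsTracial σ ∧ ∀ x, τ x = σ (ψ x) := by
  obtain ⟨σ, rfl⟩ : τ ∈ LinearMap.range ψ.toLinearMap.dualMap := by
    rw [LinearMap.range_dualMap_eq_dualAnnihilator_ker, Submodule.mem_dualAnnihilator]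
    exact hker
  refine ⟨σ, hψ.forall₂.2 fun x y => ?_, fun _ => rfl⟩
  simpa using hτ x y

theorem IsTracial.exists_eq_mul_trace {n : Type*} [Fintype n] [DecidableEq n]
    {τ : Matrix n n F →ₗ[F] F} (hτ : IsTracial τ) : ∃ t, ∀ X, τ X = t * X.trace := by
  cases isEmpty_or_nonempty n with
  | inl _ => exact ⟨0, fun X => by simp [Subsingleton.elim X 0]⟩
  | inr hn =>
    obtain ⟨o⟩ := hn
    suffices τ = τ (Matrix.single o o 1) • Matrix.traceLinearMap n F F from
      ⟨_, LinearMap.congr_fun this⟩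
    refine Matrix.ext_linearMap _ fun a b => LinearMap.ext_ring ?_
    have hab := hτ (Matrix.single a o 1) (Matrix.single o b 1)
    rw [Matrix.single_mul_single_same, one_mul] at hab
    obtain rfl | hne := eq_or_ne a b
    · simpa using hab
    · simpa [hne.symm, hne] using hab

theorem IsTracial.exists_eq_sum_mul_trace {I : Type*} [Fintype I] {n : I → Type*}
    [∀ i, Fintype (n i)] [∀ i, DecidableEq (n i)] {τ : (Π i, Matrix (n i) (n i) F) →ₗ[F] F}
    (hτ : IsTracial τ) : ∃ t : I → F, ∀ X, τ X = ∑ i, t i * (X i).trace := by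
  classical
  have hfactor (i : I) :
      IsTracial (τ ∘ₗ LinearMap.single F (fun i => Matrix (n i) (n i) F) i) := fun X Y => by
    simpa [Pi.single_mul] using hτ (Pi.single i X) (Pi.single i Y)
  choose t ht using fun i => (hfactor i).exists_eq_mul_trace
  refine ⟨t, fun X => ?_⟩
  conv_lhs => rw [← Finset.univ_sum_single X, map_sum]
  exact Finset.sum_congr rfl fun i _ => ht i (X i)

end TracialForms

section Representations

variable {F A : Type*} [Field F] [Ring A] [Algebra F A]

theorem exists_surjective_pi_matrix_of_isAlgClosed (F A : Type*) [Field F] [IsAlgClosed F] [Ring A]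
    [Algebra F A] [FiniteDimensional F A] :
    ∃ (r : ℕ) (d : Fin r → ℕ) (_ : ∀ i, NeZero (d i))
      (ψ : A →ₐ[F] Π i, Matrix (Fin (d i)) (Fin (d i)) F),
      Function.Surjective ψ ∧ ∀ x, ψ x = 0 → IsNilpotent x := by
  have : IsArtinianRing A := IsArtinianRing.of_finite F A
  obtain ⟨r, d, hd, ⟨e⟩⟩ :=
    IsSemisimpleRing.exists_algEquiv_pi_matrix_of_isAlgClosed F (A ⧸ Ring.jacobson A)
  refine ⟨r, d, hd, e.toAlgHom.comp (Ideal.Quotient.mkₐ F (Ring.jacobson A)),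
    e.surjective.comp (Ideal.Quotient.mkₐ_surjective F _), fun x hx => ?_⟩
  have hxJ : x ∈ Ring.jacobson A :=
    Ideal.Quotient.eq_zero_iff_mem.mp ((map_eq_zero_iff e e.injective).mp hx)
  obtain ⟨m, hm⟩ := IsSemiprimaryRing.isNilpotent (R := A)
  have hxm := Ideal.pow_mem_pow hxJ m
  rw [hm] at hxm
  exact ⟨m, hxm⟩

theorem exists_nat_trace_eq_of_isIdempotentElem [CharZero F] {m : Type*} [Fintype m]
    {X : Matrix m m F} (hX : IsIdempotentElem X) : ∃ r : ℕ, X.trace = r ∧ (r = 0 → X = 0) := by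
  classical
  have hlin : IsIdempotentElem X.toLin' := hX.map Matrix.toLinAlgEquiv'
  have htrace := (LinearMap.IsIdempotentElem.isProj_range _ hlin).trace
  rw [Matrix.trace_toLin'_eq] at htrace
  refine ⟨_, htrace, fun h0 => ?_⟩
  rw [h0, Nat.cast_zero, ← Matrix.trace_toLin'_eq] at htrace
  simpa using (LinearMap.IsIdempotentElem.trace_eq_zero_iff hlin).mp htrace

variable {I : Type*} [Fintype I] {n : I → Type*} [∀ i, Fintype (n i)] [∀ i, DecidableEq (n i)]
  {ψ : A →ₐ[F] Π i, Matrix (n i) (n i) F} {m : Type*} [Fintype m] [DecidableEq m]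

theorem exists_trace_eq_sum_mul_trace (hψ : Function.Surjective ψ)
    (hnil : ∀ x, ψ x = 0 → IsNilpotent x) (φ : A →ₐ[F] Matrix m m F) :
    ∃ t : I → F, ∀ x, (φ x).trace = ∑ i, t i * (ψ x i).trace := by
  have htracial : IsTracial (Matrix.traceLinearMap m F F ∘ₗ φ.toLinearMap) := fun x y => by
    simpa using Matrix.trace_mul_comm (φ x) (φ y)
  obtain ⟨σ, hσ, hφσ⟩ := htracial.exists_comp_eq hψ fun x hx =>
    (Matrix.isNilpotent_trace_of_isNilpotent ((hnil x hx).map φ)).eq_zero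
  obtain ⟨t, ht⟩ := hσ.exists_eq_sum_mul_trace
  exact ⟨t, fun x => (hφσ x).trans (ht _)⟩

theorem exists_nat_multiplicity [CharZero F] [∀ i, Nonempty (n i)] (hψ : Function.Surjective ψ)
    (hnil : ∀ x, ψ x = 0 → IsNilpotent x) (φ : A →ₐ[F] Matrix m m F) :
    ∃ r : I → ℕ, (∀ x, (φ x).trace = ∑ i, r i * (ψ x i).trace) ∧
      ∀ i, r i = 0 → ∃ x, φ x = 0 ∧ ψ x i ≠ 0 := by
  classical
  obtain ⟨t, ht⟩ := exists_trace_eq_sum_mul_trace hψ hnil φ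
  let o (i : I) : n i := Classical.arbitrary _
  have hlift (i : I) : ∃ e : A, IsIdempotentElem e ∧
      ψ e = Pi.single i (Matrix.single (o i) (o i) 1) := by
    refine exists_isIdempotentElem_eq_of_ker_isNilpotent ψ.toRingHom (fun x hx => hnil x hx) _
      (hψ _) ?_
    rw [IsIdempotentElem, ← Pi.single_mul, Matrix.single_mul_single_same, one_mul]
  choose e he hψe using hlift
  choose r hr hr0 using fun i => exists_nat_trace_eq_of_isIdempotentElem ((he i).map φ)
  have htr (i : I) : t i = r i := by
    have hti := ht (e i)
    rw [hψe, Finset.sum_eq_single i (fun j _ hj => by simp [hj]) (by simp), hr] at hti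
    simpa using hti.symm
  refine ⟨r, fun x => by simpa only [htr] using ht x, fun i hi => ⟨e i, hr0 i hi, fun h0 => ?_⟩⟩
  simpa [hψe] using congrFun (congrFun h0 (o i)) (o i)

theorem apply_eq_zero_of_multiplicity_ne_zero (hψ : Function.Surjective ψ)
    {φ : A →ₐ[F] Matrix m m F} {r : I → F} (hr : ∀ x, (φ x).trace = ∑ i, r i * (ψ x i).trace)
    {i : I} (hi : r i ≠ 0) {x : A} (hx : φ x = 0) : ψ x i = 0 := by
  classical
  refine Matrix.ext_iff_trace_mul_left.2 fun Y => ?_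
  obtain ⟨y, hy⟩ := hψ (Pi.single i Y)
  have htrace := hr (y * x)
  rw [Finset.sum_eq_single i (fun j _ hj => by simp [hy, hj]) (by simp)] at htrace
  simpa [hx, hy, hi] using htrace

end Representations

section Comatrices

variable {F C : Type*} [Field F] [AddCommGroup C] [Module F C]

theorem eq_of_forall_map_eq {x y : C ⊗[F] C}
    (h : ∀ f g : C →ₗ[F] F, LinearMap.mul' F F (TensorProduct.map f g x) =
      LinearMap.mul' F F (TensorProduct.map f g y)) : x = y := by
  let b := Module.Free.chooseBasis F C
  have hcoord (z : C ⊗[F] C) (i j) : (b.tensorProduct b).repr z (i, j) =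
      LinearMap.mul' F F (TensorProduct.map (b.coord i) (b.coord j) z) := by
    induction z with
    | zero => simp
    | add z w hz hw => simp [hz, hw]
    | tmul z w => simp [Module.Basis.tensorProduct_repr_tmul_apply, mul_comm]
  exact (b.tensorProduct b).ext_elem fun ⟨i, j⟩ => by rw [hcoord, hcoord, h]

section EntrySpan

variable {m n : Type*}

/-- The span of the entries of a matrix of vectors. For the matrix of a comodule this is the
coefficient subcoalgebra of the comodule. -/
def entrySpan (F : Type*) {C : Type*} [Field F] [AddCommGroup C] [Module F C] (u : Matrix m n C) :
    Submodule F C :=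
  Submodule.span F (Set.range (Function.uncurry u))

theorem apply_mem_entrySpan (u : Matrix m n C) (a : m) (b : n) : u a b ∈ entrySpan F u :=
  Submodule.subset_span ⟨(a, b), rfl⟩

theorem trace_mem_entrySpan [Fintype n] (u : Matrix n n C) : u.trace ∈ entrySpan F u :=
  Submodule.sum_mem _ fun a _ => apply_mem_entrySpan u a a

theorem entrySpan_le_iff {u : Matrix m n C} {U : Submodule F C} :
    entrySpan F u ≤ U ↔ ∀ a b, u a b ∈ U := by
  rw [entrySpan, Submodule.span_le, Set.range_subset_iff, Prod.forall]
  rfl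

theorem trace_eq_of_forall_map_mul_eq [Fintype n] [DecidableEq n] {u w : Matrix n n C}
    {Q : Matrix n n F} (hQ : IsUnit Q) (h : ∀ f : C →ₗ[F] F, u.map f * Q = Q * w.map f) :
    u.trace = w.trace := by
  rw [← sub_eq_zero, ← Module.forall_dual_apply_eq_zero_iff F]
  intro f
  obtain ⟨Q, rfl⟩ := hQ
  have hconj : u.map f = Q * w.map f * (Q⁻¹ : (Matrix n n F)ˣ) := by
    rw [← h f, mul_assoc, Q.mul_inv, mul_one]
  rw [map_sub, sub_eq_zero, AddMonoidHom.map_trace, AddMonoidHom.map_trace]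
  exact (congrArg Matrix.trace hconj).trans (Matrix.trace_units_conj Q _)

theorem mem_entrySpan_of_comul_eq_sum [Coalgebra F C] [Fintype n] {u : Matrix m n C} {x : C}
    {b : n → C} {j : m} (hx : Coalgebra.comul (R := F) x = ∑ i, u j i ⊗ₜ[F] b i) :
    x ∈ entrySpan F u := by
  have hcounit := congrArg (TensorProduct.rid F C) (Coalgebra.lTensor_counit_comul (R := F) x)
  rw [hx] at hcounit
  simp only [map_sum, LinearMap.lTensor_tmul, TensorProduct.rid_tmul, one_smul] at hcounit
  rw [← hcounit]
  exact Submodule.sum_mem _ fun i _ => Submodule.smul_mem _ _ (apply_mem_entrySpan u j i)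

end EntrySpan

variable [Coalgebra F C] {n : Type*} [Fintype n] [DecidableEq n]

/-- A *comatrix* is a square matrix `u` over a coalgebra with `Δ(u a b) = ∑ c, u a c ⊗ u c b` and
`ε(u a b) = δ a b`: the matrix of coefficients of a finite-dimensional comodule in some basis. The
character of the comodule is `u.trace`. -/
structure IsComatrix (F : Type*) {C : Type*} [Field F] [AddCommGroup C] [Module F C]
    [Coalgebra F C] (u : Matrix n n C) : Prop where
  comul_apply (a b : n) : Coalgebra.comul (R := F) (u a b) = ∑ c, u a c ⊗ₜ[F] u c b
  counit_apply (a b : n) : Coalgebra.counit (R := F) (u a b) = (1 : Matrix n n F) a b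

namespace IsComatrix

variable {u : Matrix n n C}

/-- The representation `f ↦ (f (u a b))` of the convolution algebra of linear forms on a coalgebra
defined by a comatrix `u`. -/
def rep (hu : IsComatrix F u) : WithConv (C →ₗ[F] F) →ₐ[F] Matrix n n F :=
  AlgHom.ofLinearMap
    { toFun := fun f => u.map f.ofConv
      map_add' := fun f g => by ext; simp
      map_smul' := fun c f => by ext; simp }
    (by ext a b; simp [LinearMap.convOne_def, hu.counit_apply])
    (fun f g => by ext a b; simp [LinearMap.convMul_def, hu.comul_apply, Matrix.mul_apply])

theorem rep_apply (hu : IsComatrix F u) (f : WithConv (C →ₗ[F] F)) (a b : n) :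
    hu.rep f a b = f.ofConv (u a b) :=
  rfl

theorem trace_rep (hu : IsComatrix F u) (f : WithConv (C →ₗ[F] F)) :
    (hu.rep f).trace = f.ofConv u.trace := by
  simp [Matrix.trace, hu.rep_apply]

theorem counit_trace (hu : IsComatrix F u) :
    Coalgebra.counit (R := F) u.trace = Fintype.card n := by
  simp [Matrix.trace, hu.counit_apply]

theorem trace_ne_zero [CharZero F] [Nonempty n] (hu : IsComatrix F u) : u.trace ≠ 0 := fun h0 => by
  have hcounit := hu.counit_trace
  rw [h0, map_zero] at hcounit
  exact Fintype.card_ne_zero (Nat.cast_eq_zero.1 hcounit.symm)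

theorem rep_eq_zero_iff (hu : IsComatrix F u) {f : WithConv (C →ₗ[F] F)} :
    hu.rep f = 0 ↔ entrySpan F u ≤ LinearMap.ker f.ofConv := by
  rw [entrySpan_le_iff, ← Matrix.ext_iff]
  rfl

theorem entrySpan_le_entrySpan_iff (hu : IsComatrix F u) {m : Type*} [Fintype m] [DecidableEq m]
    {w : Matrix m m C} (hw : IsComatrix F w) :
    entrySpan F u ≤ entrySpan F w ↔ ∀ f, hw.rep f = 0 → hu.rep f = 0 := by
  simp only [rep_eq_zero_iff]
  refine ⟨fun h f => h.trans, fun h => ?_⟩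
  rw [← Subspace.dualAnnihilator_le_dualAnnihilator_iff]
  intro f hf
  rw [Submodule.mem_dualAnnihilator] at hf ⊢
  exact h (WithConv.toConv f) hf

theorem exists_rep_eq [FiniteDimensional F C] (φ : WithConv (C →ₗ[F] F) →ₐ[F] Matrix n n F) :
    ∃ (u : Matrix n n C) (hu : IsComatrix F u), hu.rep = φ := by
  have hentry (a b : n) : ∃ x : C, ∀ f : C →ₗ[F] F, f x = φ (WithConv.toConv f) a b := by
    let l : Module.Dual F (Module.Dual F C) :=
      Matrix.entryLinearMap F F a b ∘ₗ φ.toLinearMap ∘ₗ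
        (WithConv.linearEquiv F (C →ₗ[F] F)).symm.toLinearMap
    exact ⟨(Module.evalEquiv F C).symm l, fun f => Module.apply_evalEquiv_symm_apply ..⟩
  choose u hu using hentry
  have hcomatrix : IsComatrix F (Matrix.of u) := by
    refine ⟨fun a b => eq_of_forall_map_eq fun f g => ?_, fun a b => ?_⟩
    · have hmul := hu a b (WithConv.toConv f * WithConv.toConv g).ofConv
      rw [WithConv.toConv_ofConv, map_mul, Matrix.mul_apply] at hmul
      simpa [LinearMap.convMul_def, ← hu] using hmul
    · have hone := hu a b (1 : WithConv (C →ₗ[F] F)).ofConv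
      rw [WithConv.toConv_ofConv, map_one] at hone
      simpa [LinearMap.convOne_def] using hone
  exact ⟨Matrix.of u, hcomatrix, by ext f a b; exact hu a b f.ofConv⟩

theorem of_comul_eq_sum {b : n → C} {β : n → C →ₗ[F] F}
    (hβ : ∀ i j, β i (b j) = (1 : Matrix n n F) i j)
    (hu : ∀ j, Coalgebra.comul (R := F) (b j) = ∑ i, u j i ⊗ₜ[F] b i) : IsComatrix F u where
  comul_apply j i := by
    have hcoassoc := Coalgebra.coassoc_apply (R := F) (b j)
    rw [hu] at hcoassoc
    have hcoeff := congrArg (TensorProduct.rid F (C ⊗[F] C) ∘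
      TensorProduct.map LinearMap.id (β i) ∘ (TensorProduct.assoc F C C C).symm) hcoassoc
    simpa [hu, TensorProduct.tmul_sum, hβ, Matrix.one_apply] using hcoeff
  counit_apply j i := by
    have hcounit := Coalgebra.rTensor_counit_comul (R := F) (b j)
    rw [hu] at hcounit
    have hcoeff := congrArg (β i ∘ TensorProduct.lid F C) hcounit
    simpa [hβ, Matrix.one_apply, eq_comm] using hcoeff

theorem kronecker {H : Type*} [Ring H] [Bialgebra F H] {m : Type*} [Fintype m] [DecidableEq m]
    {u : Matrix m m H} {v : Matrix n n H} (hu : IsComatrix F u) (hv : IsComatrix F v) :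
    IsComatrix F (u ⊗ₖ v) where
  comul_apply a b := by
    simp [Bialgebra.comul_mul, hu.comul_apply, hv.comul_apply, Finset.sum_mul_sum,
      Fintype.sum_prod_type]
  counit_apply a b := by
    simp [Bialgebra.counit_mul, hu.counit_apply, hv.counit_apply, Matrix.one_apply, Prod.ext_iff,
      ← ite_and, and_comm]

end IsComatrix

end Comatrices

section IrreducibleSystem

variable {F C : Type*} [Field F] [AddCommGroup C] [Module F C] [Coalgebra F C]
  {I : Type*} {n : I → Type*} [∀ i, Fintype (n i)] [∀ i, DecidableEq (n i)]

/-- A family of comatrices is an *irreducible system* if the associated representations of the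
convolution algebra `C*` identify `C*` modulo a nil ideal with a product of matrix algebras: these
are the irreducible comodules of `C`, one of each isomorphism class. -/
structure IsIrreducibleSystem (F : Type*) {C : Type*} [Field F] [AddCommGroup C] [Module F C]
    [Coalgebra F C] (v : Π i, Matrix (n i) (n i) C) : Prop where
  isComatrix (i : I) : IsComatrix F (v i)
  surjective : Function.Surjective (AlgHom.pi fun i => (isComatrix i).rep)
  isNilpotent (f : WithConv (C →ₗ[F] F)) :
    AlgHom.pi (fun i => (isComatrix i).rep) f = 0 → IsNilpotent f

theorem exists_isIrreducibleSystem (F C : Type*) [Field F] [IsAlgClosed F] [AddCommGroup C]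
    [Module F C] [Coalgebra F C] [FiniteDimensional F C] :
    ∃ (r : ℕ) (d : Fin r → ℕ) (_ : ∀ i, NeZero (d i))
      (v : Π i, Matrix (Fin (d i)) (Fin (d i)) C), IsIrreducibleSystem F v := by
  have : FiniteDimensional F (WithConv (C →ₗ[F] F)) :=
    (WithConv.linearEquiv F (C →ₗ[F] F)).symm.finiteDimensional
  obtain ⟨r, d, hd, ψ, hψ, hnil⟩ :=
    exists_surjective_pi_matrix_of_isAlgClosed F (WithConv (C →ₗ[F] F))
  choose v hv hvψ using fun i => IsComatrix.exists_rep_eq ((Pi.evalAlgHom F _ i).comp ψ)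
  obtain rfl : (AlgHom.pi fun i => (hv i).rep) = ψ := by
    ext f i : 2
    rw [AlgHom.pi_apply, hvψ]
    rfl
  exact ⟨r, d, hd, v, hv, hψ, hnil⟩

namespace IsIrreducibleSystem

variable {v : Π i, Matrix (n i) (n i) C}

theorem rep_surjective (h : IsIrreducibleSystem F v) (i : I) :
    Function.Surjective (h.isComatrix i).rep :=
  (Function.surjective_eval i).comp h.surjective

variable [∀ i, Nonempty (n i)]

theorem linearIndependent_trace (h : IsIrreducibleSystem F v) :
    LinearIndependent F fun i => (v i).trace := by
  classical
  refine linearIndependent_iff'.2 fun s c hc i hi => ?_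
  let o : n i := Classical.arbitrary _
  obtain ⟨f, hf⟩ := h.surjective (Pi.single i (Matrix.single o o 1))
  have htrace (j : I) : f.ofConv (v j).trace = if j = i then 1 else 0 := by
    have hfj : (h.isComatrix j).rep f = _ := congrFun hf j
    rw [← (h.isComatrix j).trace_rep, hfj]
    split_ifs with hj
    · subst hj
      simp
    · simp [hj]
  simpa [htrace, hi] using congrArg f.ofConv hc

theorem exists_nat_multiplicity [CharZero F] [Fintype I] (h : IsIrreducibleSystem F v)
    {m : Type*} [Fintype m] [DecidableEq m] {u : Matrix m m C} (hu : IsComatrix F u) :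
    ∃ r : I → ℕ, u.trace = ∑ i, r i • (v i).trace ∧
      ∀ i, r i ≠ 0 ↔ entrySpan F (v i) ≤ entrySpan F u := by
  obtain ⟨r, hr, hr0⟩ := MackeyPaper.exists_nat_multiplicity h.surjective h.isNilpotent hu.rep
  refine ⟨r, ?_, fun i => ?_⟩
  · rw [← sub_eq_zero, ← Module.forall_dual_apply_eq_zero_iff F]
    intro f
    have hf := hr (WithConv.toConv f)
    simp only [AlgHom.pi_apply, IsComatrix.trace_rep] at hf
    simp [hf]
  · rw [(h.isComatrix i).entrySpan_le_entrySpan_iff hu]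
    refine ⟨fun hi f hf => ?_, fun hle hi => ?_⟩
    · exact apply_eq_zero_of_multiplicity_ne_zero h.surjective hr (Nat.cast_ne_zero.2 hi) hf
    · obtain ⟨f, hf, hne⟩ := hr0 i hi
      exact hne (hle f hf)

end IsIrreducibleSystem

end IrreducibleSystem

section RegularComatrix

variable {F C : Type*} [Field F] [AddCommGroup C] [Module F C] [Coalgebra F C]
  {ι : Type*} (b : Module.Basis ι F C)

/-- The comatrix of the regular comodule `C` in the basis `b`: the matrix `u` with
`Δ(b j) = ∑ i, u j i ⊗ b i`. -/
def regularComatrix : Matrix ι ι C :=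
  Matrix.of fun j i =>
    TensorProduct.rid F C ((b.coord i).lTensor C (Coalgebra.comul (R := F) (b j)))

theorem comul_eq_sum_regularComatrix [Fintype ι] (j : ι) :
    Coalgebra.comul (R := F) (b j) = ∑ i, regularComatrix b j i ⊗ₜ[F] b i := by
  suffices ∀ x : C ⊗[F] C,
      x = ∑ i, TensorProduct.rid F C ((b.coord i).lTensor C x) ⊗ₜ[F] b i from this _
  intro x
  induction x with
  | zero => simp
  | add x y hx hy =>
    simp only [map_add, TensorProduct.add_tmul, Finset.sum_add_distrib]
    rw [← hx, ← hy]
  | tmul x y =>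
    conv_lhs => rw [← b.sum_repr y, TensorProduct.tmul_sum]
    simp [TensorProduct.smul_tmul]

theorem isComatrix_regularComatrix [Fintype ι] [DecidableEq ι] :
    IsComatrix F (regularComatrix b) :=
  IsComatrix.of_comul_eq_sum (β := b.coord) (fun i j => by
    simp [Matrix.one_apply, Finsupp.single_apply, eq_comm]) (comul_eq_sum_regularComatrix b)

theorem entrySpan_regularComatrix [Finite ι] : entrySpan F (regularComatrix b) = ⊤ := by
  cases nonempty_fintype ι
  rw [← top_le_iff, ← b.span_eq, Submodule.span_le]
  rintro _ ⟨j, rfl⟩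
  exact mem_entrySpan_of_comul_eq_sum (comul_eq_sum_regularComatrix b j)

end RegularComatrix

section Absorption

variable {F H : Type*} [Field F] [Ring H] [HopfAlgebra F H] {n : Type*}

theorem IsComatrix.mul_map_antipode [Fintype n] [DecidableEq n] {v : Matrix n n H}
    (hv : IsComatrix F v) : v * v.map (HopfAlgebra.antipode F) = 1 := by
  ext a b
  have hantipode := HopfAlgebra.mul_antipode_lTensor_comul_apply (R := F) (v a b)
  rw [hv.comul_apply, hv.counit_apply] at hantipode
  simpa [Matrix.mul_apply, Matrix.one_apply, apply_ite] using hantipode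

variable {ι : Type*} (b : Module.Basis ι F H)

/-- The block matrix whose `(a, c)` block is the matrix of right multiplication by `v a c` in the
basis `b`. -/
def rightMulBlockMatrix (v : Matrix n n H) : Matrix (ι × n) (ι × n) F :=
  Matrix.of fun p q => b.repr (b p.1 * v p.2 q.2) q.1

theorem rightMulBlockMatrix_mul [Fintype n] [Fintype ι] (v w : Matrix n n H) :
    rightMulBlockMatrix b v * rightMulBlockMatrix b w = rightMulBlockMatrix b (v * w) := by
  have hmul (x y : H) (i : ι) : b.repr (x * y) i = ∑ l, b.repr x l * b.repr (b l * y) i := by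
    conv_lhs => rw [← b.sum_repr x, Finset.sum_mul]
    simp
  ext ⟨j, a⟩ ⟨i, d⟩
  simp [rightMulBlockMatrix, Matrix.mul_apply, Fintype.sum_prod_type_right, Finset.mul_sum,
    ← mul_assoc, hmul (b j * _)]

theorem rightMulBlockMatrix_one [DecidableEq n] [DecidableEq ι] :
    rightMulBlockMatrix b (1 : Matrix n n H) = 1 := by
  ext ⟨j, a⟩ ⟨i, d⟩
  obtain rfl | had := eq_or_ne a d
  · simp [rightMulBlockMatrix, Matrix.one_apply, Finsupp.single_apply]
  · simp [rightMulBlockMatrix, Matrix.one_apply, had]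

variable [Fintype n] [DecidableEq n] [Fintype ι]

theorem IsComatrix.isUnit_rightMulBlockMatrix [DecidableEq ι] {v : Matrix n n H}
    (hv : IsComatrix F v) : IsUnit (rightMulBlockMatrix b v) :=
  IsUnit.of_mul_eq_one (rightMulBlockMatrix b (v.map (HopfAlgebra.antipode F))) <| by
    rw [rightMulBlockMatrix_mul, hv.mul_map_antipode, rightMulBlockMatrix_one]

/-- For a left comodule `V`, the map `x ⊗ y ↦ ∑ x y₍₋₁₎ ⊗ y₍₀₎` is an isomorphism from `H ⊗ V` to
a direct sum of copies of `H`; its matrix is `rightMulBlockMatrix b v`. -/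
theorem IsComatrix.trace_regularComatrix_mul_trace {v : Matrix n n H} (hv : IsComatrix F v) :
    (regularComatrix b).trace * v.trace = Fintype.card n • (regularComatrix b).trace := by
  classical
  let u := regularComatrix b
  have hcoeff (j i : ι) (a c : n) :
      ∑ l, ∑ e, b.repr (b l * v e c) i • (u j l * v a e) =
        ∑ l, b.repr (b j * v a c) l • u l i := by
    have hcomul : ∑ l, ∑ e, (u j l * v a e) ⊗ₜ[F] (b l * v e c) =
        ∑ l, b.repr (b j * v a c) l • ∑ i, u l i ⊗ₜ[F] b i := by
      trans Coalgebra.comul (R := F) (b j * v a c)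
      · simp [Bialgebra.comul_mul, comul_eq_sum_regularComatrix, hv.comul_apply,
          Finset.sum_mul_sum, u]
      · conv_lhs => rw [← b.sum_repr (b j * v a c), map_sum]
        simp [comul_eq_sum_regularComatrix, u]
    have hcoord := congrArg (TensorProduct.rid F H ∘ (b.coord i).lTensor H) hcomul
    simpa [Finsupp.single_apply] using hcoord
  have hintertwine (f : H →ₗ[F] F) : (u ⊗ₖ v).map f * rightMulBlockMatrix b v =
      rightMulBlockMatrix b v * (u ⊗ₖ (1 : Matrix n n H)).map f := by
    ext ⟨j, a⟩ ⟨i, c⟩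
    have hf := congrArg f (hcoeff j i a c)
    simpa [rightMulBlockMatrix, Matrix.mul_apply, Fintype.sum_prod_type, Matrix.one_apply,
      apply_ite, mul_comm] using hf
  have htrace := trace_eq_of_forall_map_mul_eq (hv.isUnit_rightMulBlockMatrix b) hintertwine
  rw [Matrix.trace_kronecker, Matrix.trace_kronecker, Matrix.trace_one] at htrace
  rw [htrace, nsmul_eq_mul, Nat.cast_comm]

end Absorption

section Subcoalgebras

variable {F : Type} [Field F] {H : Type} [Ring H] [HopfAlgebra F H]

theorem IsComatrix.isSubcoalgebra_entrySpan {n : Type*} [Fintype n] [DecidableEq n]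
    {u : Matrix n n H} (hu : IsComatrix F u) : IsSubcoalgebra F H (entrySpan F u) := by
  suffices entrySpan F u ≤ (LinearMap.range (TensorProduct.map (entrySpan F u).subtype
      (entrySpan F u).subtype)).comap (Coalgebra.comul (R := F)) from this
  rw [entrySpan_le_iff]
  intro a b
  rw [Submodule.mem_comap, hu.comul_apply]
  exact Submodule.sum_mem _ fun c _ =>
    ⟨⟨u a c, apply_mem_entrySpan u a c⟩ ⊗ₜ ⟨u c b, apply_mem_entrySpan u c b⟩, rfl⟩

theorem IsSubcoalgebra.exists_comul_eq_sum {U : Submodule F H} (hU : IsSubcoalgebra F H U)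
    {ι : Type*} [Fintype ι] (b : Module.Basis ι F U) {x : H} (hx : x ∈ U) :
    ∃ w : ι → U, Coalgebra.comul (R := F) x = ∑ i, (w i : H) ⊗ₜ[F] (b i : H) := by
  obtain ⟨z, hz⟩ := hU x hx
  obtain ⟨w, hw⟩ := TensorProduct.eq_repr_basis_right b z
  refine ⟨w, ?_⟩
  rw [← hz, ← hw, Finsupp.sum_fintype _ _ (by simp)]
  simp

theorem IsSubcoalgebra.exists_isComatrix [FiniteDimensional F H] {U : Submodule F H}
    (hU : IsSubcoalgebra F H U) :
    ∃ (n : ℕ) (u : Matrix (Fin n) (Fin n) H), IsComatrix F u ∧ entrySpan F u = U := by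
  let b := Module.finBasis F U
  choose β hβ using fun i => LinearMap.exists_extend (b.coord i)
  choose w hw using fun j => hU.exists_comul_eq_sum b (b j).2
  let u : Matrix _ _ H := Matrix.of fun j i => (w j i : H)
  have hβb (i j) : β i (b j) = (1 : Matrix _ _ F) i j := by
    have hij := LinearMap.congr_fun (hβ i) (b j)
    simpa [Matrix.one_apply, Finsupp.single_apply, eq_comm] using hij
  refine ⟨_, u, IsComatrix.of_comul_eq_sum hβb hw,
    le_antisymm (entrySpan_le_iff.2 fun j i => (w j i).2) ?_⟩
  refine U.map_subtype_top.symm.trans_le ?_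
  rw [← b.span_eq, Submodule.map_span_le]
  rintro _ ⟨j, rfl⟩
  exact mem_entrySpan_of_comul_eq_sum (u := u) (hw j)

theorem IsCocomm.apply_mul_comm {x : H} (hx : IsCocomm F H x) (f g : WithConv (H →ₗ[F] F)) :
    (f * g).ofConv x = (g * f).ofConv x := by
  have hswap (z : H ⊗[F] H) : LinearMap.mul' F F (TensorProduct.map f.ofConv g.ofConv z) =
      LinearMap.mul' F F (TensorProduct.map g.ofConv f.ofConv (TensorProduct.comm F H H z)) := by
    induction z with
    | zero => simp
    | add z w hz hw => simp [hz, hw]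
    | tmul z w => simp [mul_comm]
  have hcomul := hswap (Coalgebra.comul x)
  rw [hx] at hcomul
  simpa [LinearMap.convMul_def] using hcomul

theorem IsComatrix.isCocomm_trace {n : Type*} [Fintype n] [DecidableEq n] {u : Matrix n n H}
    (hu : IsComatrix F u) : IsCocomm F H u.trace := by
  simp only [IsCocomm, Matrix.trace, Matrix.diag_apply, map_sum, hu.comul_apply,
    TensorProduct.comm_tmul]
  exact Finset.sum_comm

theorem IsComatrix.exists_eq_smul_trace_of_isCocomm {n : Type*} [Fintype n] [DecidableEq n]
    {u : Matrix n n H} (hu : IsComatrix F u) (hsurj : Function.Surjective hu.rep) {x : H}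
    (hx : x ∈ entrySpan F u) (hcomm : IsCocomm F H x) : ∃ s : F, x = s • u.trace := by
  let τ : WithConv (H →ₗ[F] F) →ₗ[F] F :=
    Module.Dual.eval F H x ∘ₗ (WithConv.linearEquiv F (H →ₗ[F] F)).toLinearMap
  have hτ : IsTracial τ := hcomm.apply_mul_comm
  obtain ⟨σ, hσ, hτσ⟩ := hτ.exists_comp_eq hsurj fun f hf => hu.rep_eq_zero_iff.1 hf hx
  obtain ⟨s, hs⟩ := hσ.exists_eq_mul_trace
  refine ⟨s, ?_⟩
  rw [← sub_eq_zero, ← Module.forall_dual_apply_eq_zero_iff F]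
  intro f
  have hf := (hτσ (WithConv.toConv f)).trans (hs _)
  rw [hu.trace_rep] at hf
  rw [map_sub, map_smul, sub_eq_zero]
  exact hf

theorem IsIrreducibleSystem.exists_entrySpan_eq [CharZero F] [FiniteDimensional F H] {I : Type*}
    [Finite I] {n : I → Type*} [∀ i, Fintype (n i)] [∀ i, DecidableEq (n i)] [∀ i, Nonempty (n i)]
    {v : Π i, Matrix (n i) (n i) H} (h : IsIrreducibleSystem F v) {C : Submodule F H}
    (hC : IsSimpleSubcoalgebra F H C) : ∃ i, entrySpan F (v i) = C := by
  cases nonempty_fintype I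
  obtain ⟨hCsub, hC0, hCmin⟩ := hC
  obtain ⟨m, w, hw, rfl⟩ := hCsub.exists_isComatrix
  have hm : Nonempty (Fin m) := by
    by_contra hempty
    rw [not_nonempty_iff] at hempty
    exact hC0 (eq_bot_iff.2 (entrySpan_le_iff.2 fun a => isEmptyElim a))
  obtain ⟨r, hr, hle⟩ := h.exists_nat_multiplicity hw
  obtain ⟨i, hi⟩ : ∃ i, r i ≠ 0 := by
    by_contra! hr0
    exact hw.trace_ne_zero (by simp [hr, hr0])
  have hvi : entrySpan F (v i) ≠ ⊥ := fun h0 =>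
    (h.isComatrix i).trace_ne_zero ((Submodule.mem_bot F).1 (h0 ▸ trace_mem_entrySpan (v i)))
  exact ⟨i, hCmin _ ((hle i).1 hi) (h.isComatrix i).isSubcoalgebra_entrySpan hvi⟩

end Subcoalgebras

section Harmonic

variable {I : Type*} [Fintype I]

/-- Expand `∑ i, ∑ j, W i j * (f j - f i) ^ 2` with
`(f j - f i) ^ 2 = f j ^ 2 - f i ^ 2 - 2 * f i * (f j - f i)`. -/
theorem eq_of_sum_mul_sub_eq_zero {R : Type*} [CommRing R] [LinearOrder R] [IsStrictOrderedRing R]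
    {W : I → I → R} (hW : ∀ i j, 0 ≤ W i j) (hbal : ∀ i, ∑ j, W i j = ∑ j, W j i) {f : I → R}
    (hf : ∀ i, ∑ j, W i j * (f j - f i) = 0) {i j : I} (hij : W i j ≠ 0) : f i = f j := by
  have hcross : ∑ i, ∑ j, W i j * (2 * f i * (f j - f i)) = 0 :=
    Finset.sum_eq_zero fun i _ => by
      rw [← mul_zero (2 * f i), ← hf i, Finset.mul_sum]
      exact Finset.sum_congr rfl fun j _ => by ring
  have hsq : ∑ i, ∑ j, W i j * f j ^ 2 = ∑ i, ∑ j, W i j * f i ^ 2 := by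
    rw [Finset.sum_comm]
    simp only [← Finset.sum_mul, hbal]
  have hzero : ∑ i, ∑ j, W i j * (f j - f i) ^ 2 = 0 := by
    calc ∑ i, ∑ j, W i j * (f j - f i) ^ 2
        = ∑ i, ∑ j, W i j * f j ^ 2 - ∑ i, ∑ j, W i j * f i ^ 2
          - ∑ i, ∑ j, W i j * (2 * f i * (f j - f i)) := by
          simp only [← Finset.sum_sub_distrib]
          exact Finset.sum_congr rfl fun i _ => Finset.sum_congr rfl fun j _ => by ring
      _ = 0 := by rw [hcross, hsq, sub_self, sub_zero]
  have hnonneg (i j : I) : 0 ≤ W i j * (f j - f i) ^ 2 := mul_nonneg (hW i j) (sq_nonneg _)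
  have hrow := (Fintype.sum_eq_zero_iff_of_nonneg fun i =>
    Finset.sum_nonneg fun j _ => hnonneg i j).1 hzero
  have hentry := (Fintype.sum_eq_zero_iff_of_nonneg (hnonneg i)).1 (congrFun hrow i)
  have hdiff := (mul_eq_zero.1 (congrFun hentry j)).resolve_left hij
  exact (sub_eq_zero.1 (pow_eq_zero_iff two_ne_zero |>.1 hdiff)).symm

theorem eq_of_sum_smul_sub_eq_zero {V : Type*} [AddCommGroup V] [Module ℚ V] {W : I → I → ℕ}
    (hbal : ∀ i, ∑ j, W i j = ∑ j, W j i) {f : I → V}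
    (hf : ∀ i, ∑ j, W i j • (f j - f i) = 0) {i j : I} (hij : W i j ≠ 0) : f i = f j := by
  rw [← sub_eq_zero, ← Module.forall_dual_apply_eq_zero_iff ℚ]
  intro φ
  rw [map_sub, sub_eq_zero]
  refine eq_of_sum_mul_sub_eq_zero (W := fun i j => (W i j : ℚ)) (f := fun i => φ (f i))
    (fun _ _ => Nat.cast_nonneg _) (fun i => by exact_mod_cast hbal i) (fun i => ?_)
    (Nat.cast_ne_zero.2 hij)
  simpa using congrArg φ (hf i)

end Harmonic

section NormalizedCharacters

variable {F H : Type*} [Field F] [Ring H] [HopfAlgebra F H]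

theorem entrySpan_kronecker {m n : Type*} (u : Matrix m m H) (w : Matrix n n H) :
    entrySpan F (u ⊗ₖ w) = entrySpan F u * entrySpan F w := by
  refine le_antisymm (entrySpan_le_iff.2 fun p q =>
    Submodule.mul_mem_mul (apply_mem_entrySpan u _ _) (apply_mem_entrySpan w _ _)) ?_
  rw [entrySpan, entrySpan, Submodule.span_mul_span, Submodule.span_le]
  rintro _ ⟨_, ⟨p, rfl⟩, _, ⟨q, rfl⟩, rfl⟩
  exact apply_mem_entrySpan (u ⊗ₖ w) (p.1, q.1) (p.2, q.2)

/-- The element `χ Λ / χ(1)`, where `χ = u.trace` is the character of the comodule with matrix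
`u` and `χ(1)` its degree. -/
def normalizedTraceMul (F : Type*) {H : Type*} [Field F] [Ring H] [HopfAlgebra F H] {n : Type*}
    [Fintype n] (u : Matrix n n H) (Λ : H) : H :=
  (Fintype.card n : F)⁻¹ • (u.trace * Λ)

theorem card_smul_normalizedTraceMul [CharZero F] {n : Type*} [Fintype n] [Nonempty n]
    (u : Matrix n n H) (Λ : H) :
    Fintype.card n • normalizedTraceMul F u Λ = u.trace * Λ := by
  rw [normalizedTraceMul, ← Nat.cast_smul_eq_nsmul F,
    smul_inv_smul₀ (Nat.cast_ne_zero.2 Fintype.card_ne_zero)]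

namespace IsIrreducibleSystem

variable [CharZero F] {I : Type*} {n : I → Type*} [∀ i, Fintype (n i)]
  [∀ i, DecidableEq (n i)] {v : Π i, Matrix (n i) (n i) H}

theorem card_eq_sum [Fintype I] (h : IsIrreducibleSystem F v) {m : Type*} [Fintype m]
    [DecidableEq m] {u : Matrix m m H} (hu : IsComatrix F u) {r : I → ℕ}
    (hr : u.trace = ∑ i, r i • (v i).trace) :
    Fintype.card m = ∑ i, r i * Fintype.card (n i) := by
  have hcounit := congrArg (Coalgebra.counit (R := F)) hr
  simp only [hu.counit_trace, map_sum, map_nsmul, (h.isComatrix _).counit_trace] at hcounit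
  rw [← Nat.cast_inj (R := F), hcounit]
  simp only [nsmul_eq_mul, Nat.cast_sum, Nat.cast_mul]

variable [∀ i, Nonempty (n i)]

/-- The weight is given by the multiplicities of the regular comodule. -/
theorem exists_stationary_weight [Fintype I] [FiniteDimensional F H] (h : IsIrreducibleSystem F v)
    {m : Type*} [Fintype m] [DecidableEq m] {κ : Matrix m m H} (hκ : IsComatrix F κ)
    {T : I → I → ℕ} (hT : ∀ i, (v i).trace * κ.trace = ∑ j, T i j • (v j).trace) :
    ∃ p : I → ℕ, (∀ i, p i ≠ 0) ∧ ∀ j, ∑ i, p i * T i j = Fintype.card m * p j := by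
  let b := Module.finBasis F H
  obtain ⟨p, hp, hple⟩ := h.exists_nat_multiplicity (isComatrix_regularComatrix b)
  refine ⟨p, fun i => (hple i).2 (by simp [entrySpan_regularComatrix]), ?_⟩
  have habsorb := hκ.trace_regularComatrix_mul_trace b
  simp only [hp, Finset.sum_mul, smul_mul_assoc, hT, Finset.smul_sum, smul_smul] at habsorb
  rw [Finset.sum_comm] at habsorb
  simp only [← Finset.sum_smul, ← Nat.cast_smul_eq_nsmul F] at habsorb
  intro j
  exact_mod_cast Fintype.linearIndependent_iffₛ.1 h.linearIndependent_trace _ _ habsorb j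

theorem normalizedTraceMul_eq_of_entrySpan_le [Finite I] [FiniteDimensional F H]
    (h : IsIrreducibleSystem F v) {m : Type*} [Fintype m] [DecidableEq m] {κ : Matrix m m H}
    (hκ : IsComatrix F κ) {Λ : H} (hΛ : κ.trace * Λ = Fintype.card m • Λ) {i j : I}
    (hij : entrySpan F (v j) ≤ entrySpan F (v i) * entrySpan F κ) :
    normalizedTraceMul F (v i) Λ = normalizedTraceMul F (v j) Λ := by
  cases nonempty_fintype I
  let := Module.compHom H (algebraMap ℚ F)
  let d (i : I) := Fintype.card (n i)
  let y (i : I) := normalizedTraceMul F (v i) Λ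
  choose T hT hTle using fun i => h.exists_nat_multiplicity ((h.isComatrix i).kronecker hκ)
  have hrow (i : I) : d i * Fintype.card m = ∑ j, T i j * d j := by
    rw [← Fintype.card_prod, h.card_eq_sum ((h.isComatrix i).kronecker hκ) (hT i)]
  simp only [Matrix.trace_kronecker, entrySpan_kronecker] at hT hTle
  obtain ⟨p, hp, hcol⟩ := h.exists_stationary_weight hκ hT
  have hharm (i : I) : ∑ j, (T i j * d j) • (y j - y i) = 0 := by
    calc ∑ j, (T i j * d j) • (y j - y i)
        = ∑ j, T i j • ((v j).trace * Λ) - (∑ j, T i j * d j) • y i := by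
          simp only [smul_sub, Finset.sum_sub_distrib, Finset.sum_smul, mul_smul, d, y,
            card_smul_normalizedTraceMul]
      _ = (v i).trace * (κ.trace * Λ) - Fintype.card m • d i • y i := by
          simp only [← smul_mul_assoc, ← Finset.sum_mul, ← hT, ← hrow, mul_assoc, smul_smul,
            mul_comm]
      _ = 0 := by
          rw [card_smul_normalizedTraceMul, hΛ, mul_smul_comm, sub_self]
  refine eq_of_sum_smul_sub_eq_zero (f := y) (W := fun i j => p i * (T i j * d j)) (fun i => ?_)
    (fun i => ?_) (mul_ne_zero (hp i) (mul_ne_zero ((hTle i j).2 hij) Fintype.card_ne_zero))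
  · rw [← Finset.mul_sum, ← hrow]
    simp only [← mul_assoc, ← Finset.sum_mul, hcol]
    ring
  · simp only [mul_smul (p i), ← Finset.smul_sum]
    rw [hharm, smul_zero]

end IsIrreducibleSystem

end NormalizedCharacters

section Conjugates

variable {F : Type} [Field F] [CharZero F] {H : Type} [Ring H] [HopfAlgebra F H]

namespace IsIrreducibleSystem

variable {I : Type*} {n : I → Type*} [∀ i, Fintype (n i)] [∀ i, DecidableEq (n i)]
  [∀ i, Nonempty (n i)] {v : Π i, Matrix (n i) (n i) H}

theorem forall_isCocomm_mul_eq_smul_iff (h : IsIrreducibleSystem F v) {Λ x : H} {t : F} {i : I} :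
    (∀ c ∈ entrySpan F (v i), IsCocomm F H c → x * (c * Λ) = t • (c * Λ)) ↔
      x * normalizedTraceMul F (v i) Λ = t • normalizedTraceMul F (v i) Λ := by
  refine ⟨fun hx => ?_, fun hx c hc hcomm => ?_⟩
  · rw [normalizedTraceMul, mul_smul_comm, smul_comm,
      hx _ (trace_mem_entrySpan (v i)) (h.isComatrix i).isCocomm_trace]
  · obtain ⟨s, rfl⟩ :=
      (h.isComatrix i).exists_eq_smul_trace_of_isCocomm (h.rep_surjective i) hc hcomm
    simp only [smul_mul_assoc, ← card_smul_normalizedTraceMul (F := F), mul_smul_comm, hx,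
      smul_comm t]

theorem conjK_congr (h : IsIrreducibleSystem F v) (K : Subalgebra F H) {Λ : H} {i j : I}
    (hij : normalizedTraceMul F (v i) Λ = normalizedTraceMul F (v j) Λ) :
    conjK F H K Λ (entrySpan F (v i)) = conjK F H K Λ (entrySpan F (v j)) := by
  simp only [conjK, h.forall_isCocomm_mul_eq_smul_iff, hij]

end IsIrreducibleSystem

theorem statement_13_general [IsAlgClosed F] [FiniteDimensional F H] (K : Subalgebra F H)
    (hK : IsSubcoalgebra F H K.toSubmodule) (Λ : H)
    (hΛ : ∀ x ∈ K, x * Λ = Coalgebra.counit (R := F) x • Λ) (C D : Submodule F H)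
    (hC : IsSimpleSubcoalgebra F H C) (hD : IsSimpleSubcoalgebra F H D)
    (hDC : D ≤ C * K.toSubmodule) : conjK F H K Λ D = conjK F H K Λ C := by
  obtain ⟨r, d, _, v, h⟩ := exists_isIrreducibleSystem F H
  obtain ⟨i, rfl⟩ := h.exists_entrySpan_eq hC
  obtain ⟨j, rfl⟩ := h.exists_entrySpan_eq hD
  obtain ⟨m, κ, hκ, hκK⟩ := hK.exists_isComatrix
  have hκΛ : κ.trace * Λ = Fintype.card (Fin m) • Λ := by
    have hmem : κ.trace ∈ K := by
      rw [← Subalgebra.mem_toSubmodule, ← hκK]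
      exact trace_mem_entrySpan κ
    rw [hΛ _ hmem, hκ.counit_trace, Nat.cast_smul_eq_nsmul]
  exact h.conjK_congr K
    (h.normalizedTraceMul_eq_of_entrySpan_le hκ hκΛ (hκK.symm ▸ hDC)).symm

end Conjugates


section Statements

variable [FiniteDimensional k H] [IsSemisimpleRing H]

/-- Proposition 34: if `C` and `D` are simple subcoalgebras of
`H` with `DK = CK`, then the conjugate Hopf subalgebras coincide:
`ᴰK = ᶜK`. -/
theorem statement_13 (K : Subalgebra k H) (hK : IsHopfSubalgebra k H K)
    (Λ : H) (hΛ : IsIdempotentIntegral k H K Λ)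
    (C D : Submodule k H) (hC : IsSimpleSubcoalgebra k H C)
    (hD : IsSimpleSubcoalgebra k H D)
    (hDK : D * K.toSubmodule = C * K.toSubmodule) :
    conjK k H K Λ D = conjK k H K Λ C := by
  refine statement_13_general K hK.1 Λ (fun x hx => (hΛ.2.2 x hx).1) C D hC hD ?_
  rw [← hDK]
  exact fun x hx => mul_one x ▸ Submodule.mul_mem_mul hx K.one_mem

end Statements

end

end MackeyPaper
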